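/- arXiv:1704.00719 — 2 statements merged into one kernel-verified Lean document; each statement's English description precedes it below -/
import Mathlib

section
/- Let (R, 𝔪) be a commutative noetherian local ring with a non-trivial direct sum decomposition 𝔪 = I ⊕ J into nonzero ideals, and let M be a finitely generated R-module with pd_R M ≥ 2. If R/I or R/J has depth zero, then Ω_R²M is neither a free R/I-module nor a free R/J-module. -/
/-!
Write `𝔪 = I ⊕ J`, so `IJ = 0`. By symmetry it suffices to exclude `S = Ω²M ≅ (R/I)^m`. Minimality
gives `S ⊆ 𝔪F₁`, and since `d₀(F₁) ⊆ 𝔪F₀`, also `soc(R)F₁ ⊆ S`; moreover `S ≠ 0` because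
`pd M ≥ 2`. If one of the quotients has depth zero, `R` has a nonzero socle element `x`
(`exists_socle_mem`), lying in `J` if `depth R/I = 0` and in `I` if `depth R/J = 0`.

* If `x ∈ J`, then `x` kills `S ⊆ 𝔪F₁`, but the annihilator of `(R/I)^m` is `I`; so `x ∈ I ∩ J = 0`.
* If `x ∈ I`, then `x e ∈ S` for a basis vector `e` of `F₁`. Its image in `(R/I)^m` is killed by `𝔪`.
  A unit coordinate of that image would force `𝔪 ⊆ I`, hence `J = 0`. So `x e ∈ 𝔪S`. As `I`
  kills `S`, the coordinates of elements of `S` lie in `0 : I = J + soc(I)`, and `𝔪(0 : I) ⊆ J`.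
  Hence `x ∈ I ∩ J = 0`.
-/

universe u

open IsLocalRing CategoryTheory

/-- A minimal free resolution of the module `M` over the local ring `R`:
`⋯ → R^{rank 2} → R^{rank 1} → R^{rank 0} → M → 0` is exact, and each differential maps into
`𝔪` times the next free module (minimality). -/
structure MinimalFreeResolution (R : Type u) [CommRing R] [IsLocalRing R]
    (M : Type u) [AddCommGroup M] [Module R M] where
  rank : ℕ → ℕ
  aug : (Fin (rank 0) → R) →ₗ[R] M
  d : (i : ℕ) → ((Fin (rank (i + 1)) → R) →ₗ[R] (Fin (rank i) → R))
  aug_surjective : Function.Surjective aug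
  exact_aug : LinearMap.ker aug = LinearMap.range (d 0)
  exact : ∀ i, LinearMap.ker (d i) = LinearMap.range (d (i + 1))
  minimal : ∀ i, LinearMap.range (d i) ≤
    (maximalIdeal R) • (⊤ : Submodule R (Fin (rank i) → R))

/-- `S` is an `i`-th syzygy `Ω^i M` of `M`, i.e. the `i`-th kernel computed from a minimal free
resolution of `M` over the local ring `R` (`Ω⁰M = M`, `Ω¹M = ker aug`, `Ω^{j+2}M = ker (d j)`). -/
def IsNthSyzygy (R : Type u) [CommRing R] [IsLocalRing R] (i : ℕ)
    (M : Type u) [AddCommGroup M] [Module R M]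
    (S : Type u) [AddCommGroup S] [Module R S] : Prop :=
  ∃ F : MinimalFreeResolution R M,
    match i with
    | 0 => Nonempty (S ≃ₗ[R] M)
    | 1 => Nonempty (S ≃ₗ[R] LinearMap.ker F.aug)
    | (j + 2) => Nonempty (S ≃ₗ[R] LinearMap.ker (F.d j))

/-- `pd_R M ≤ n`: a minimal free resolution of `M` vanishes in homological degrees `> n`. -/
def ProjDimLE (R : Type u) [CommRing R] [IsLocalRing R]
    (M : Type u) [AddCommGroup M] [Module R M] (n : ℕ) : Prop :=
  ∃ F : MinimalFreeResolution R M, ∀ i, n < i → F.rank i = 0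

/-- `A` is a direct summand of the `R`-module `X`. -/
def IsDirectSummand (R : Type u) [CommRing R] (A X : Type u)
    [AddCommGroup A] [Module R A] [AddCommGroup X] [Module R X] : Prop :=
  ∃ (ι : A →ₗ[R] X) (π : X →ₗ[R] A), π.comp ι = LinearMap.id

/-- A local ring has depth zero iff every non-unit is a zerodivisor. -/
def DepthZero (A : Type u) [CommRing A] : Prop :=
  ∀ y : A, ¬ IsUnit y → y ∉ nonZeroDivisors A


/-- If `𝔪 = I ⊕ J`, `I ≠ 0`, and `R/J` has depth zero, then `I` contains a nonzero socle element
of `R`: prime avoidance gives a nonzero socle element of `R/J`, which lies in `𝔪/J ≅ I`. -/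
lemma exists_socle_mem {R : Type u} [CommRing R] [IsNoetherianRing R] [IsLocalRing R]
    (I J : Ideal R) (hI : I ≠ ⊥) (hinf : I ⊓ J = ⊥)
    (hsup : I ⊔ J = maximalIdeal R) (hdepth : DepthZero (R ⧸ J)) :
    ∃ x ∈ I, x ≠ 0 ∧ ∀ y ∈ maximalIdeal R, y * x = 0 := by
  have hJm : J ≤ maximalIdeal R := hsup ▸ le_sup_right
  have hIm : I ≤ maximalIdeal R := hsup ▸ le_sup_left
  have hJtop : J ≠ ⊤ := fun h => (maximalIdeal.isMaximal R).ne_top (top_le_iff.1 (h ▸ hJm))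
  have : Nontrivial (R ⧸ J) := Ideal.Quotient.nontrivial_iff.2 hJtop
  have : IsLocalRing (R ⧸ J) :=
    IsLocalRing.of_surjective' (Ideal.Quotient.mk J) Ideal.Quotient.mk_surjective
  have hsub : (maximalIdeal (R ⧸ J) : Set (R ⧸ J)) ⊆
      ⋃ p ∈ associatedPrimes (R ⧸ J) (R ⧸ J), (p : Set (R ⧸ J)) := by
    rw [biUnion_associatedPrimes_eq_compl_nonZeroDivisors]
    intro y hy
    exact hdepth y hy
  rw [Ideal.subset_union_prime_finite (associatedPrimes.finite (R ⧸ J) (R ⧸ J)) ⊥ ⊥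
    (fun p hp _ _ => hp.isPrime)] at hsub
  obtain ⟨p, hp, hmp⟩ := hsub
  obtain ⟨hprime, z, hz⟩ := isAssociatedPrime_iff.1 hp
  obtain ⟨c, rfl⟩ := Ideal.Quotient.mk_surjective z
  have hkill : ∀ y ∈ maximalIdeal R, y * c ∈ J := by
    intro y hy
    have h1 : Ideal.Quotient.mk J y ∈ p := by
      apply hmp
      rw [mem_maximalIdeal, mem_nonunits_iff]
      intro hu
      have : (maximalIdeal R).map (Ideal.Quotient.mk J) = ⊤ :=
        Ideal.eq_top_of_isUnit_mem _ (Ideal.mem_map_of_mem _ hy) hu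
      have h2 := Ideal.comap_map_of_surjective' (Ideal.Quotient.mk J)
        Ideal.Quotient.mk_surjective (maximalIdeal R)
      rw [this, Ideal.comap_top, Ideal.mk_ker, sup_eq_left.2 hJm] at h2
      exact (maximalIdeal.isMaximal R).ne_top h2.symm
    rw [hz, Submodule.mem_colon_singleton] at h1
    rw [← Ideal.Quotient.eq_zero_iff_mem, map_mul]
    simpa using h1
  have hcJ : c ∉ J := by
    intro hc
    apply hprime.ne_top
    rw [hz, Ideal.Quotient.eq_zero_iff_mem.2 hc, Ideal.eq_top_iff_one,
      Submodule.mem_colon_singleton]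
    simp
  have hcm : c ∈ maximalIdeal R := by
    by_contra hc
    have hu : IsUnit c := by simpa using hc
    apply hI
    rw [eq_bot_iff, ← hinf]
    refine le_inf le_rfl fun y hy => ?_
    exact (Ideal.mul_unit_mem_iff_mem J hu).1 (hkill y (hIm hy))
  rw [← hsup] at hcm
  obtain ⟨a, ha, b, hb, rfl⟩ := Submodule.mem_sup.1 hcm
  refine ⟨a, ha, ?_, fun y hy => ?_⟩
  · rintro rfl
    exact hcJ (by simpa using hb)
  · have h1 : y * a ∈ J := by
      have := J.sub_mem (hkill y hy) (J.mul_mem_left y hb)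
      rwa [mul_add, add_sub_cancel_right] at this
    have : y * a ∈ I ⊓ J := ⟨I.mul_mem_left y ha, h1⟩
    simpa [hinf] using this

lemma coord_mem_of_mem_smul_top {R : Type u} [CommRing R] (K : Ideal R) {n : ℕ}
    {v : Fin n → R} (hv : v ∈ K • (⊤ : Submodule R (Fin n → R))) (i : Fin n) : v i ∈ K := by
  refine Submodule.smul_induction_on hv (fun r hr w _ => ?_) (fun a b ha hb => ?_)
  · exact K.mul_mem_right _ hr
  · exact K.add_mem ha hb

/-- If the differential `d k` of a minimal resolution vanishes, so does the free module
`R^{rank (k+1)}`: it equals the image of `d (k+1)`, hence lies in `𝔪` times itself. -/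
lemma rank_succ_eq_zero {R : Type u} [CommRing R] [IsLocalRing R]
    {M : Type u} [AddCommGroup M] [Module R M] (F : MinimalFreeResolution R M) (k : ℕ)
    (h : ∀ v, F.d k v = 0) : F.rank (k + 1) = 0 := by
  by_contra hne
  let i : Fin (F.rank (k + 1)) := ⟨0, Nat.pos_of_ne_zero hne⟩
  have h1 : (Pi.single i (1 : R)) ∈ LinearMap.ker (F.d k) := h _
  rw [F.exact k] at h1
  have h2 := coord_mem_of_mem_smul_top _ (F.minimal (k + 1) h1) i
  rw [Pi.single_eq_same] at h2
  exact (Ideal.ne_top_iff_one _).1 (maximalIdeal.isMaximal R).ne_top h2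

/-- If `pd M ≥ 2` then the second syzygy is nonzero. -/
lemma exists_ne_zero_of_not_projDimLE {R : Type u} [CommRing R] [IsLocalRing R]
    {M : Type u} [AddCommGroup M] [Module R M] (hpd : ¬ ProjDimLE R M 1)
    (F : MinimalFreeResolution R M) : ∃ v, F.d 0 v = 0 ∧ v ≠ 0 := by
  by_contra! hcon
  refine hpd ⟨F, fun i hi => ?_⟩
  obtain ⟨k, rfl⟩ := Nat.exists_eq_add_of_lt hi
  have key : ∀ k, F.rank (k + 2) = 0 := by
    intro k
    induction k with
    | zero =>
      refine rank_succ_eq_zero F 1 fun v => hcon _ ?_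
      have : F.d 1 v ∈ LinearMap.ker (F.d 0) := F.exact 0 ▸ ⟨v, rfl⟩
      exact this
    | succ k ih =>
      refine rank_succ_eq_zero F (k + 2) fun v => ?_
      funext j
      exact (Fin.cast ih j).elim0
  have := key k
  rwa [show 1 + k + 1 = k + 2 by omega]

lemma not_free_quotient
    (R : Type u) [CommRing R] [IsNoetherianRing R] [IsLocalRing R]
    (I J : Ideal R) (hI : I ≠ ⊥) (hJ : J ≠ ⊥) (hinf : I ⊓ J = ⊥)
    (hsup : I ⊔ J = maximalIdeal R)
    (M : Type u) [AddCommGroup M] [Module R M]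
    (hpd : ¬ ProjDimLE R M 1)
    (hdepth : DepthZero (R ⧸ I) ∨ DepthZero (R ⧸ J))
    (F : MinimalFreeResolution R M) (m : ℕ)
    (φ : LinearMap.ker (F.d 0) ≃ₗ[R] (Fin m → R ⧸ I)) : False := by
  have hJm : J ≤ maximalIdeal R := hsup ▸ le_sup_right
  obtain ⟨v, hv, hv0⟩ := exists_ne_zero_of_not_projDimLE hpd F
  have hmem0 : ∀ x ∈ I, x ∈ J → x = 0 := fun x h1 h2 => by
    have : x ∈ I ⊓ J := ⟨h1, h2⟩
    simpa [hinf] using this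
  have hcoord : ∀ s : LinearMap.ker (F.d 0), ∀ i, s.1 i ∈ maximalIdeal R := by
    intro s i
    have h1 := (F.exact 0).le s.2
    exact coord_mem_of_mem_smul_top _ (F.minimal 1 h1) i
  rcases hdepth with hd | hd
  · obtain ⟨x, hxJ, hx0, hx⟩ := exists_socle_mem J I hJ (inf_comm I J ▸ hinf)
      (sup_comm I J ▸ hsup) hd
    have hm : 0 < m := by
      rcases Nat.eq_zero_or_pos m with rfl | h
      · refine absurd ?_ hv0
        have : (⟨v, hv⟩ : LinearMap.ker (F.d 0)) = 0 := φ.injective (Subsingleton.elim _ _)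
        exact congrArg Subtype.val this
      · exact h
    let w : Fin m → R ⧸ I := fun _ => 1
    have h0 : x • φ.symm w = 0 := by
      ext i
      have := hx _ (hcoord (φ.symm w) i)
      rw [mul_comm] at this
      simpa using this
    have h1 : x • w = 0 := by
      have := congrArg φ h0
      simpa using this
    have h2 : Ideal.Quotient.mk I x = 0 := by
      have := congrFun h1 ⟨0, hm⟩
      simpa [w, Algebra.smul_def] using this
    exact hx0 (hmem0 x (Ideal.Quotient.eq_zero_iff_mem.1 h2) hxJ)
  · obtain ⟨x, hxI, hx0, hx⟩ := exists_socle_mem I J hI hinf hsup hd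
    obtain ⟨i, -⟩ := Function.ne_iff.1 hv0
    -- the socle multiple `x e_i` of a basis vector is a cycle
    have hcyc : F.d 0 (x • Pi.single i (1 : R)) = 0 := by
      rw [map_smul]
      ext j
      have := hx _ (coord_mem_of_mem_smul_top _ (F.minimal 0 ⟨Pi.single i (1 : R), rfl⟩) j)
      rw [mul_comm] at this
      simpa using this
    let s : LinearMap.ker (F.d 0) := ⟨x • Pi.single i (1 : R), hcyc⟩
    have hs : s.1 i = x := by simp [s]
    choose r hr using fun j => Ideal.Quotient.mk_surjective (φ s j)
    have hrm : ∀ j, r j ∈ maximalIdeal R := by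
      intro j
      by_contra hj
      have hu : IsUnit (r j) := by simpa using hj
      apply hJ
      rw [eq_bot_iff, ← hinf]
      refine le_inf (fun y hy => ?_) le_rfl
      have h0 : y • s = 0 := by
        ext k
        have := hx y (hJm hy)
        simp [s, ← mul_assoc, this]
      have h1 : y • φ s = 0 := by rw [← map_smul, h0, map_zero]
      have h2 := congrFun h1 j
      rw [Pi.smul_apply, ← hr, Algebra.smul_def, Ideal.Quotient.algebraMap_eq, ← map_mul,
        Pi.zero_apply, Ideal.Quotient.eq_zero_iff_mem] at h2
      exact (Ideal.mul_unit_mem_iff_mem I hu).1 h2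
    let t : Fin m → LinearMap.ker (F.d 0) := fun j => φ.symm (Pi.single j 1)
    have hsum : s = ∑ j, r j • t j := by
      apply φ.injective
      rw [map_sum]
      ext k
      simp [t, Finset.sum_apply, Pi.single_apply, ← hr, Algebra.smul_def]
    -- coordinates of cycles annihilate `I`, hence `𝔪` multiplies them into `J`
    have htJ : ∀ j, ∀ y ∈ maximalIdeal R, y * (t j).1 i ∈ J := by
      intro j y hy
      have hIt : ∀ a ∈ I, a * (t j).1 i = 0 := by
        intro a ha
        have h0 : a • t j = 0 := by
          apply φ.injective
          rw [map_smul, map_zero]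
          ext k
          rw [Pi.smul_apply, Algebra.smul_def, Ideal.Quotient.algebraMap_eq,
            Ideal.Quotient.eq_zero_iff_mem.2 ha, zero_mul, Pi.zero_apply]
        have := congrFun (congrArg Subtype.val h0) i
        simpa using this
      rw [← hsup] at hy
      obtain ⟨a, ha, b, hb, rfl⟩ := Submodule.mem_sup.1 hy
      rw [add_mul, hIt a ha, zero_add]
      exact J.mul_mem_right _ hb
    refine hx0 (hmem0 x hxI ?_)
    have h3 : x = ∑ j, r j * (t j).1 i := by
      rw [← hs, hsum]
      simp [Finset.sum_apply]
    rw [h3]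
    exact J.sum_mem fun j _ => htJ j _ (hrm j)

/-- **Proposition 3.5.** If `𝔪 = I ⊕ J` with `I, J` nonzero, `pd_R M ≥ 2`, and `R/I` or `R/J` has
depth zero, then `Ω²M` is neither `R/I`-free nor `R/J`-free. -/
theorem second_syzygy_not_free_of_depth_zero
    (R : Type u) [CommRing R] [IsNoetherianRing R] [IsLocalRing R]
    (I J : Ideal R) (hI : I ≠ ⊥) (hJ : J ≠ ⊥) (hinf : I ⊓ J = ⊥)
    (hsup : I ⊔ J = maximalIdeal R)
    (M : Type u) [AddCommGroup M] [Module R M] [Module.Finite R M]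
    (hpd : ¬ ProjDimLE R M 1)
    (hdepth : DepthZero (R ⧸ I) ∨ DepthZero (R ⧸ J)) :
    ∀ (S : Type u) [AddCommGroup S] [Module R S], IsNthSyzygy R 2 M S →
      (¬ ∃ m : ℕ, Nonempty (S ≃ₗ[R] (Fin m → R ⧸ I))) ∧
      (¬ ∃ m : ℕ, Nonempty (S ≃ₗ[R] (Fin m → R ⧸ J))) := by
  rintro S _ _ ⟨F, ⟨e⟩⟩
  refine ⟨?_, ?_⟩
  · rintro ⟨m, ⟨φ⟩⟩
    exact not_free_quotient R I J hI hJ hinf hsup M hpd hdepth F m (e.symm.trans φ)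
  · rintro ⟨m, ⟨φ⟩⟩
    exact not_free_quotient R J I hJ hI (inf_comm I J ▸ hinf) (sup_comm I J ▸ hsup) M hpd
      hdepth.symm F m (e.symm.trans φ)
end

section
/- Let (R, 𝔪) be a d-dimensional Cohen-Macaulay commutative noetherian local ring whose maximal ideal 𝔪 is quasi-decomposable, and let 𝒳 be a resolving subcategory of mod R all of whose objects are maximal Cohen-Macaulay R-modules. If 𝒳 contains a non-free R-module, then 𝒳 contains the d-th syzygy Ω_R^d k of the residue field k. -/
/-!
The residue field `k` is reached through the subcategories `SyzIn^[n] P` of modules whose `n`-th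
syzygies lie in `P`; these are again resolving, and they contain `M/(xs)M` for every `M` in `P` on
which the sequence `xs` of length `n` is regular (`IsResolvingSubcat.quotient_mem`).

Let `xs`, of length `n`, be the sequence modulo which the maximal ideal decomposes, and
`A = R/(xs)`. A minimal syzygy of a non-free object of `P` is not free (`not_free_ker`, a case of
the Auslander-Buchsbaum formula), so a non-free object can be replaced by an `n`-th syzygy, on which
`xs` is regular. Reducing two steps of its minimal resolution modulo `xs` yields a matrix over `A`
whose kernel `W` is a nonzero object of `SyzIn^[n] P` with `W ⊆ 𝔪 Aᵇ`
(`IsResolvingSubcat.exists_matrix`).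

Write `𝔪_A = N₁ ⊕ N₂`, so that `N₁ N₂ = 0`. Projecting coordinatewise splits `W` into a part with
entries in `N₁` and one with entries in `N₂`, one of which is nonzero. A nonzero object killed by
`N₂` has `N₂` as a direct summand of its minimal first syzygy over `A`, so `N₂` is an object; being
nonzero and killed by `N₁`, it gives `N₁` in the same way. Hence `𝔪_A` is in `SyzIn^[n] P`
(`IsResolvingSubcat.maximalIdeal_mem`), and `k` is in `SyzIn^[n + 1] P`, thus in `SyzIn^[d + 1] P`.

Finally, embedding `k` into the socle of `R/(rs)` for a regular sequence `rs` of length `d` improves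
this to `SyzIn^[d] P` (`IsResolvingSubcat.residueField_mem`).
-/

universe u

open IsLocalRing CategoryTheory

/-- A resolving subcategory of `mod R` (the finitely generated `R`-modules): a collection of
(f.g.) modules, closed under isomorphism, containing `R`, closed under direct summands,
extensions, and syzygies (kernels of epimorphisms from finite free modules). -/
structure IsResolvingSubcat (R : Type u) [CommRing R] (P : ModuleCat.{u} R → Prop) : Prop where
  fg : ∀ A, P A → Module.Finite R A
  iso_closed : ∀ A B : ModuleCat.{u} R, Nonempty (A ≃ₗ[R] B) → P A → P B
  contains_ring : P (ModuleCat.of R R)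
  summand_closed : ∀ A B : ModuleCat.{u} R,
    (∃ (ι : B →ₗ[R] A) (π : A →ₗ[R] B), π.comp ι = LinearMap.id) → P A → P B
  ext_closed : ∀ (A B C : ModuleCat.{u} R) (f : A →ₗ[R] B) (g : B →ₗ[R] C),
    Function.Injective f → Function.Surjective g → LinearMap.ker g = LinearMap.range f →
    P A → P C → P B
  syzygy_closed : ∀ (B : ModuleCat.{u} R) (m : ℕ) (f : (Fin m → R) →ₗ[R] B),
    Function.Surjective f → P B → P (ModuleCat.of R (LinearMap.ker f))

/-- A module is decomposable if it is the (internal) direct sum of two nonzero submodules. -/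
def IsDecomposableModule (A : Type u) [CommRing A] (M : Type u) [AddCommGroup M]
    [Module A M] : Prop :=
  ∃ N₁ N₂ : Submodule A M, N₁ ≠ ⊥ ∧ N₂ ≠ ⊥ ∧ N₁ ⊓ N₂ = ⊥ ∧ N₁ ⊔ N₂ = ⊤

/-- The maximal ideal `𝔪` of `R` is quasi-decomposable: there is an `R`-regular sequence `𝐱` in
`𝔪` such that `𝔪/(𝐱)` is decomposable. -/
def HasQuasiDecomposableMaxIdeal (R : Type u) [CommRing R] [IsLocalRing R] : Prop :=
  ∃ x : List R, (∀ a ∈ x, a ∈ maximalIdeal R) ∧ RingTheory.Sequence.IsRegular R x ∧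
    IsDecomposableModule (R ⧸ Ideal.ofList x)
      (↥((maximalIdeal R).map (Ideal.Quotient.mk (Ideal.ofList x))))

/-! ### Minimal covers -/

/-- A finitely generated module over a local ring has a free cover `Aⁿ → M` whose kernel lies in
`𝔪 Aⁿ`: take `n` least possible. -/
lemma exists_minimal_cover (A : Type u) [CommRing A] [IsLocalRing A] (M : Type u)
    [AddCommGroup M] [Module A M] [Module.Finite A M] :
    ∃ (n : ℕ) (f : (Fin n → A) →ₗ[A] M), Function.Surjective f ∧
      ∀ c, f c = 0 → ∀ i, c i ∈ maximalIdeal A := by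
  classical
  have hex : ∃ n : ℕ, ∃ f : (Fin n → A) →ₗ[A] M, Function.Surjective f :=
    Module.Finite.exists_fin' A M
  obtain ⟨f, hf⟩ := Nat.find_spec hex
  refine ⟨Nat.find hex, f, hf, fun c hc i => ?_⟩
  by_contra hci
  have hu : IsUnit (c i) := by simpa using hci
  obtain ⟨u, hu⟩ := hu
  generalize hn : Nat.find hex = n at f c i
  cases n with
  | zero => exact i.elim0
  | succ k =>
    -- the `i`-th generator is redundant
    refine Nat.find_min hex (m := k) (by omega)
      ⟨f.comp (LinearMap.pi fun j =>
        (if h : ∃ l, i.succAbove l = j then LinearMap.proj h.choose else 0)), fun m => ?_⟩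
    obtain ⟨w, rfl⟩ := hf m
    let w' : Fin (k + 1) → A := w - (w i * ↑u⁻¹) • c
    have hw' : f w' = f w := by simp [w', hc]
    refine ⟨fun l => w' (i.succAbove l), ?_⟩
    rw [← hw', LinearMap.comp_apply]
    congr 1
    ext j
    rw [LinearMap.pi_apply]
    split_ifs with h
    · simp only [LinearMap.proj_apply]
      rw [h.choose_spec]
    · have : j = i := by
        by_contra hji
        exact h (Fin.exists_succAbove_eq hji)
      subst this
      simp [w', ← hu]

/-! ### Resolving subcategories and the modules with first syzygy in one -/

namespace IsResolvingSubcat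

variable {R : Type u} [CommRing R] {P : ModuleCat.{u} R → Prop}

section

variable {A B C : Type u} [AddCommGroup A] [Module R A] [AddCommGroup B] [Module R B]
  [AddCommGroup C] [Module R C]

lemma of_equiv (h : IsResolvingSubcat R P) (e : A ≃ₗ[R] B) (hA : P (.of R A)) : P (.of R B) :=
  h.iso_closed (.of R A) (.of R B) ⟨e⟩ hA

lemma of_summand (h : IsResolvingSubcat R P) (ι : B →ₗ[R] A) (π : A →ₗ[R] B)
    (hπ : ∀ b, π (ι b) = b) (hA : P (.of R A)) : P (.of R B) :=
  h.summand_closed (.of R A) (.of R B) ⟨ι, π, LinearMap.ext hπ⟩ hA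

lemma of_extension (h : IsResolvingSubcat R P) (f : A →ₗ[R] B) (g : B →ₗ[R] C)
    (hf : Function.Injective f) (hg : Function.Surjective g) (hfg : Function.Exact f g)
    (hA : P (.of R A)) (hC : P (.of R C)) : P (.of R B) :=
  h.ext_closed (.of R A) (.of R B) (.of R C) f g hf hg (LinearMap.exact_iff.mp hfg) hA hC

lemma prod (h : IsResolvingSubcat R P) (hA : P (.of R A)) (hB : P (.of R B)) :
    P (.of R (A × B)) :=
  h.of_extension (LinearMap.inl R A B) (LinearMap.snd R A B) LinearMap.inl_injective
    LinearMap.snd_surjective Function.Exact.inl_snd hA hB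

lemma of_subsingleton (h : IsResolvingSubcat R P) [Subsingleton A] : P (.of R A) :=
  h.of_summand (A := R) 0 0 (fun _ => Subsingleton.elim _ _) h.contains_ring

lemma pi (h : IsResolvingSubcat R P) (hA : P (.of R A)) (n : ℕ) : P (.of R (Fin n → A)) := by
  induction n with
  | zero => exact h.of_subsingleton
  | succ n ih => exact h.of_equiv (Fin.consLinearEquiv R (fun _ => A)) (h.prod hA ih)

lemma free (h : IsResolvingSubcat R P) (n : ℕ) : P (.of R (Fin n → R)) :=
  h.pi h.contains_ring n

end

/-- The modules `N` having a first syzygy (with respect to some finite free cover) in `P`. -/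
def SyzIn (P : ModuleCat.{u} R → Prop) : ModuleCat.{u} R → Prop := fun N =>
  ∃ (m : ℕ) (f : (Fin m → R) →ₗ[R] N), Function.Surjective f ∧ P (.of R (LinearMap.ker f))

section

variable {A B C : Type u} [AddCommGroup A] [Module R A] [AddCommGroup B] [Module R B]
  [AddCommGroup C] [Module R C]

/-- Rotation of a short exact sequence: from `0 → A → B → C → 0` and a free cover `f : Rᵐ → C`
one gets `0 → ker f → A × Rᵐ → B → 0`. -/
lemma exists_rotation (i : A →ₗ[R] B) (g : B →ₗ[R] C) (hi : Function.Injective i)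
    (hg : Function.Surjective g) (hig : Function.Exact i g) {m : ℕ} (f : (Fin m → R) →ₗ[R] C)
    (hf : Function.Surjective f) :
    ∃ (j : LinearMap.ker f →ₗ[R] A × (Fin m → R)) (q : A × (Fin m → R) →ₗ[R] B),
      Function.Injective j ∧ Function.Surjective q ∧ Function.Exact j q := by
  obtain ⟨s, hs⟩ := Module.projective_lifting_property g f hg
  have hs' : ∀ v, g (s v) = f v := fun v => LinearMap.congr_fun hs v
  have hmem : ∀ v : LinearMap.ker f, s v ∈ LinearMap.range i := fun v => by
    have := v.2
    rw [LinearMap.mem_ker, ← hs'] at this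
    exact (hig _).mp this
  let e := LinearEquiv.ofInjective i hi
  let t : LinearMap.ker f →ₗ[R] A :=
    e.symm.toLinearMap ∘ₗ (s ∘ₗ (LinearMap.ker f).subtype).codRestrict _ hmem
  have ht : ∀ v, i (t v) = s v := fun v => by
    have := e.apply_symm_apply ⟨s v, hmem v⟩
    exact congrArg Subtype.val this
  refine ⟨(-t).prod (LinearMap.ker f).subtype, i.coprod s, ?_, ?_, ?_⟩
  · intro v w hvw
    exact Subtype.ext (congrArg Prod.snd hvw)
  · intro b
    obtain ⟨v, hv⟩ := hf (g b)
    have : g (b - s v) = 0 := by rw [map_sub, hs', hv, sub_self]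
    obtain ⟨a, ha⟩ := (hig _).mp this
    exact ⟨(a, v), by simp [ha]⟩
  · rintro ⟨a, v⟩
    simp only [LinearMap.coprod_apply, Set.mem_range, LinearMap.prod_apply]
    constructor
    · intro h0
      have hv : f v = 0 := by
        rw [← hs', ← map_zero g, ← h0, map_add, (hig (i a)).mpr ⟨a, rfl⟩, zero_add]
      refine ⟨⟨v, hv⟩, Prod.ext (hi ?_) rfl⟩
      have := ht ⟨v, hv⟩
      simp only [LinearMap.neg_apply, Function.prod_apply, map_neg, this]
      exact (eq_neg_of_add_eq_zero_left h0).symm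
    · rintro ⟨w, hw⟩
      obtain ⟨rfl, rfl⟩ := Prod.ext_iff.mp hw
      simp [ht]

/-- In `0 → A → B → C → 0`, if `B` is in `P` and a first syzygy of `C` is, then so is `A`. -/
lemma of_syzIn (h : IsResolvingSubcat R P) (i : A →ₗ[R] B) (g : B →ₗ[R] C)
    (hi : Function.Injective i) (hg : Function.Surjective g) (hig : Function.Exact i g)
    (hB : P (.of R B)) (hC : SyzIn P (.of R C)) : P (.of R A) := by
  obtain ⟨m, f, hf, hK⟩ := hC
  obtain ⟨j, q, hj, hq, hjq⟩ := exists_rotation i g hi hg hig f hf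
  exact h.of_summand (LinearMap.inl R A (Fin m → R)) (LinearMap.fst R A (Fin m → R))
    (fun _ => rfl) (h.of_extension j q hj hq hjq hK hB)

lemma le_syzIn (h : IsResolvingSubcat R P) (hA : P (.of R A)) : SyzIn P (.of R A) := by
  have : Module.Finite R A := h.fg _ hA
  obtain ⟨m, f, hf⟩ := Module.Finite.exists_fin' R A
  exact ⟨m, f, hf, h.syzygy_closed (.of R A) m f hf hA⟩

lemma of_kernel (h : IsResolvingSubcat R P) (i : A →ₗ[R] B) (g : B →ₗ[R] C)
    (hi : Function.Injective i) (hg : Function.Surjective g) (hig : Function.Exact i g)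
    (hB : P (.of R B)) (hC : P (.of R C)) : P (.of R A) :=
  h.of_syzIn i g hi hg hig hB (h.le_syzIn hC)

lemma syzIn_of_cokernel (h : IsResolvingSubcat R P) (i : A →ₗ[R] B) (g : B →ₗ[R] C)
    (hi : Function.Injective i) (hg : Function.Surjective g) (hig : Function.Exact i g)
    (hA : P (.of R A)) (hB : P (.of R B)) : SyzIn P (.of R C) := by
  have : Module.Finite R B := h.fg _ hB
  have : Module.Finite R C := Module.Finite.of_surjective g hg
  obtain ⟨m, f, hf⟩ := Module.Finite.exists_fin' R C
  obtain ⟨j, q, hj, hq, hjq⟩ := exists_rotation i g hi hg hig f hf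
  exact ⟨m, f, hf, h.of_kernel j q hj hq hjq (h.prod hA (h.free m)) hB⟩

lemma exact_subtype_ker (f : A →ₗ[R] B) : Function.Exact (LinearMap.ker f).subtype f := by
  rw [LinearMap.exact_iff, Submodule.range_subtype]

/-- Membership in `SyzIn P` does not depend on the free cover. -/
lemma SyzIn.ker (h : IsResolvingSubcat R P) (hA : SyzIn P (.of R A)) (hB : P (.of R B))
    (f : B →ₗ[R] A) (hf : Function.Surjective f) : P (.of R (LinearMap.ker f)) :=
  h.of_syzIn (LinearMap.ker f).subtype f (Submodule.injective_subtype _) hf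
    (exact_subtype_ker f) hB hA

end

/-- The modules with a first syzygy in a resolving subcategory again form one. -/
lemma syzIn (h : IsResolvingSubcat R P) : IsResolvingSubcat R (SyzIn P) where
  fg := fun A ⟨_, f, hf, _⟩ => Module.Finite.of_surjective f hf
  iso_closed := fun A B ⟨e⟩ ⟨m, f, hf, hK⟩ =>
    ⟨m, e.toLinearMap ∘ₗ f, e.surjective.comp hf,
      h.of_equiv (LinearEquiv.ofEq _ _ (LinearEquiv.ker_comp e f).symm) hK⟩
  contains_ring := h.le_syzIn h.contains_ring
  summand_closed := by
    rintro A B ⟨ι, π, hπ⟩ hA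
    have hπ' : ∀ b, π (ι b) = b := fun b => LinearMap.congr_fun hπ b
    obtain ⟨m, f, hf, -⟩ := id hA
    -- with `e = ι π` idempotent, the kernel of `(e f, (1 - e) f) : R²ᵐ → A` contains `ker (π f)`
    -- as a direct summand
    let F : (Fin m → R) × (Fin m → R) →ₗ[R] A := (ι ∘ₗ π ∘ₗ f).coprod (f - ι ∘ₗ π ∘ₗ f)
    have hF : Function.Surjective F := fun a => by
      obtain ⟨v, rfl⟩ := hf a
      exact ⟨(v, v), by simp [F]⟩
    have hK := SyzIn.ker h (A := A) hA (h.prod (h.free m) (h.free m)) F hF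
    have hmem : ∀ v : LinearMap.ker F, v.1.1 ∈ LinearMap.ker (π ∘ₗ f) := by
      rintro ⟨⟨v, w⟩, hvw⟩
      have := congrArg π (LinearMap.mem_ker.mp hvw)
      simpa [F, hπ'] using this
    refine ⟨m, π ∘ₗ f, (Function.LeftInverse.surjective hπ').comp hf,
      h.of_summand (A := LinearMap.ker F)
        (LinearMap.codRestrict _ (LinearMap.inl R _ _ ∘ₗ (LinearMap.ker (π ∘ₗ f)).subtype)
          fun v => ?_)
        (LinearMap.codRestrict _ (LinearMap.fst R _ _ ∘ₗ (LinearMap.ker F).subtype) hmem)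
        (fun v => rfl) hK⟩
    have := v.2
    rw [LinearMap.mem_ker, LinearMap.comp_apply] at this
    simp [F, this]
  ext_closed := by
    rintro A B C i g hi hg hig ⟨a, fa, hfa, hKa⟩ ⟨c, fc, hfc, hKc⟩
    have hig' : Function.Exact i g := LinearMap.exact_iff.mpr hig
    have hgi : ∀ x, g (i x) = 0 := fun x => (hig' _).mpr ⟨x, rfl⟩
    obtain ⟨s, hs⟩ := Module.projective_lifting_property g fc hg
    have hs' : ∀ v, g (s v) = fc v := fun v => LinearMap.congr_fun hs v
    let F : (Fin a → R) × (Fin c → R) →ₗ[R] B := (i ∘ₗ fa).coprod s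
    have hF : Function.Surjective F := fun b => by
      obtain ⟨w, hw⟩ := hfc (g b)
      have : g (b - s w) = 0 := by rw [map_sub, hs', hw, sub_self]
      obtain ⟨x, hx⟩ := (hig' _).mp this
      obtain ⟨v, rfl⟩ := hfa x
      exact ⟨(v, w), by simp [F, hx]⟩
    have hm1 : ∀ v : LinearMap.ker fa, LinearMap.inl R (Fin a → R) (Fin c → R) v.1 ∈
        LinearMap.ker F := fun v => by
      have := v.2
      rw [LinearMap.mem_ker] at this
      simp [F, this]
    have hm2 : ∀ v : LinearMap.ker F, v.1.2 ∈ LinearMap.ker fc := by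
      rintro ⟨⟨v, w⟩, hvw⟩
      have := congrArg g (LinearMap.mem_ker.mp hvw)
      simpa [F, hgi, hs'] using this
    have hK : P (.of R (LinearMap.ker F)) := by
      refine h.of_extension
        (LinearMap.codRestrict _ (LinearMap.inl R _ _ ∘ₗ (LinearMap.ker fa).subtype) hm1)
        (LinearMap.codRestrict _ (LinearMap.snd R _ _ ∘ₗ (LinearMap.ker F).subtype) hm2)
        ?_ ?_ ?_ hKa hKc
      · intro v w hvw
        have := congrArg (fun z => z.1.1) hvw
        exact Subtype.ext this
      · intro w
        have hw := w.2
        rw [LinearMap.mem_ker, ← hs'] at hw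
        obtain ⟨x, hx⟩ := (hig' _).mp hw
        obtain ⟨v, rfl⟩ := hfa x
        exact ⟨⟨(-v, w), by simp [F, hx]⟩, rfl⟩
      · rintro ⟨⟨v, w⟩, hvw⟩
        constructor
        · intro h0
          have hw : w = 0 := congrArg Subtype.val h0
          subst hw
          have hv : fa v = 0 := hi (by simpa [F] using hvw)
          exact ⟨⟨v, hv⟩, rfl⟩
        · rintro ⟨v', hv'⟩
          have := congrArg (fun z => z.1.2) hv'
          exact Subtype.ext this.symm
    exact h.syzIn_of_cokernel (LinearMap.ker F).subtype F (Submodule.injective_subtype _) hF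
      (exact_subtype_ker F) hK (h.prod (h.free a) (h.free c))
  syzygy_closed := fun B m f hf hB =>
    h.le_syzIn (SyzIn.ker h (A := B) hB (h.free m) f hf)

lemma syzIn_iterate (h : IsResolvingSubcat R P) (n : ℕ) : IsResolvingSubcat R (SyzIn^[n] P) := by
  induction n generalizing P with
  | zero => exact h
  | succ n ih => exact ih h.syzIn

lemma syzIn_iterate_mono (h : IsResolvingSubcat R P) {n m : ℕ} (hnm : n ≤ m) {A : Type u}
    [AddCommGroup A] [Module R A] (hA : SyzIn^[n] P (.of R A)) : SyzIn^[m] P (.of R A) := by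
  induction m, hnm using Nat.le_induction with
  | base => exact hA
  | succ m _ ih =>
    rw [Function.iterate_succ_apply']
    exact (h.syzIn_iterate m).le_syzIn ih

end IsResolvingSubcat

/-! ### Regular sequences, syzygies and quotients -/

namespace IsResolvingSubcat

open RingTheory.Sequence
open scoped Pointwise

variable {R : Type u} [CommRing R] {P : ModuleCat.{u} R → Prop}

/-- Reducing an object of `P` modulo a regular sequence of length `n` gives a module whose `n`-th
syzygies lie in `P`. -/
lemma quotient_mem (h : IsResolvingSubcat R P) (xs : List R) {M : Type u} [AddCommGroup M]
    [Module R M] (hM : P (.of R M)) (hx : IsWeaklyRegular M xs) :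
    SyzIn^[xs.length] P (.of R (M ⧸ (Ideal.ofList xs • ⊤ : Submodule R M))) := by
  induction xs generalizing P M with
  | nil =>
    have : (Ideal.ofList ([] : List R) • ⊤ : Submodule R M) = ⊥ := by simp
    exact h.of_equiv (Submodule.quotEquivOfEqBot _ this).symm hM
  | cons r rs ih =>
    rw [isWeaklyRegular_cons_iff] at hx
    have h1 : SyzIn P (.of R (QuotSMulTop r M)) := by
      refine h.syzIn_of_cokernel (LinearMap.lsmul R M r) (Submodule.mkQ (r • ⊤)) hx.1
        (Submodule.mkQ_surjective _) ?_ hM hM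
      rw [LinearMap.exact_iff, Submodule.ker_mkQ]
      ext y
      simp [Submodule.mem_smul_pointwise_iff_exists]
    exact (h.syzIn.syzIn_iterate rs.length).of_equiv
      (Submodule.quotOfListConsSMulTopEquivQuotSMulTopInner M r rs).symm (ih h.syzIn h1 hx.2)

lemma finiteLength_mem [IsLocalRing R] (h : IsResolvingSubcat R P)
    (hk : P (.of R (ResidueField R))) {N : Type u} [AddCommGroup N] [Module R N]
    (hN : IsFiniteLength R N) : P (.of R N) := by
  induction hN with
  | of_subsingleton => exact h.of_subsingleton
  | @of_simple_quotient M _ _ N hs _ ih =>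
    refine h.of_extension N.subtype N.mkQ (Submodule.injective_subtype _)
      (Submodule.mkQ_surjective _) ?_ ih ?_
    · rw [LinearMap.exact_iff, Submodule.ker_mkQ, Submodule.range_subtype]
    · obtain ⟨I, hI, ⟨e⟩⟩ := isSimpleModule_iff_quot_maximal.mp hs
      obtain rfl := IsLocalRing.eq_maximalIdeal hI
      exact h.of_equiv e.symm hk

/-- If `d`-th syzygies of `M` lie in `P`, so does the one computed from any free resolution. -/
lemma isNthSyzygy_mem [IsLocalRing R] (h : IsResolvingSubcat R P) {d : ℕ} {M S : Type u}
    [AddCommGroup M] [Module R M] [AddCommGroup S] [Module R S]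
    (hM : SyzIn^[d] P (.of R M)) (hS : IsNthSyzygy R d M S) : P (.of R S) := by
  obtain ⟨F, hF⟩ := hS
  match d, hM, hF with
  | 0, hM, ⟨e⟩ => exact h.of_equiv e.symm hM
  | 1, hM, ⟨e⟩ => exact h.of_equiv e.symm (SyzIn.ker h hM (h.free _) F.aug F.aug_surjective)
  | j + 2, hM, ⟨e⟩ =>
    have key : ∀ j i, SyzIn^[i + j + 2] P (.of R M) →
        SyzIn^[i] P (.of R (LinearMap.ker (F.d j))) := by
      intro j
      induction j with
      | zero =>
        intro i hi
        rw [Function.iterate_succ_apply'] at hi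
        have h1 := SyzIn.ker (h.syzIn_iterate _) hi ((h.syzIn_iterate _).free _) F.aug
          F.aug_surjective
        rw [F.exact_aug, Function.iterate_succ_apply'] at h1
        have h2 := SyzIn.ker (h.syzIn_iterate _) h1 ((h.syzIn_iterate _).free _)
          (F.d 0).rangeRestrict (F.d 0).surjective_rangeRestrict
        rwa [LinearMap.ker_rangeRestrict] at h2
      | succ j ih =>
        intro i hi
        have h1 := ih (i + 1) (by convert hi using 2; ring)
        rw [F.exact, Function.iterate_succ_apply'] at h1
        have h2 := SyzIn.ker (h.syzIn_iterate _) h1 ((h.syzIn_iterate _).free _)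
          (F.d (j + 1)).rangeRestrict (F.d (j + 1)).surjective_rangeRestrict
        rwa [LinearMap.ker_rangeRestrict] at h2
    exact h.of_equiv e.symm (key j 0 (by simpa using hM))

end IsResolvingSubcat

section RegularSequences

open RingTheory.Sequence

variable {R : Type u} [CommRing R]

lemma quotSMulTop_map_injective {A B C : Type u} [AddCommGroup A] [Module R A]
    [AddCommGroup B] [Module R B] [AddCommGroup C] [Module R C] {f : A →ₗ[R] B} {g : B →ₗ[R] C}
    (hf : Function.Injective f) (hfg : Function.Exact f g) {r : R} (hr : IsSMulRegular C r) :
    Function.Injective (QuotSMulTop.map r f) := by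
  have h0 : Function.Exact (0 : PUnit.{u + 1} →ₗ[R] A) f := by
    rw [LinearMap.exact_iff, LinearMap.range_zero, LinearMap.ker_eq_bot.mpr hf]
  have := QuotSMulTop.map_first_exact_on_four_term_exact_of_isSMulRegular_last h0 hfg hr
  rw [map_zero, LinearMap.exact_iff, LinearMap.range_zero] at this
  exact LinearMap.ker_eq_bot.mp this

/-- For a regular sequence on `C`, the sequence `0 → A → B → C → 0` stays left exact modulo it. -/
lemma mem_smul_top_of_apply_mem {A B C : Type u} [AddCommGroup A] [Module R A]
    [AddCommGroup B] [Module R B] [AddCommGroup C] [Module R C] {f : A →ₗ[R] B} {g : B →ₗ[R] C}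
    (hf : Function.Injective f) (hg : Function.Surjective g) (hfg : Function.Exact f g)
    {rs : List R} (hr : IsWeaklyRegular C rs) {a : A}
    (ha : f a ∈ (Ideal.ofList rs • ⊤ : Submodule R B)) :
    a ∈ (Ideal.ofList rs • ⊤ : Submodule R A) := by
  have h0 : Function.Exact (0 : PUnit.{u + 1} →ₗ[R] A) f := by
    rw [LinearMap.exact_iff, LinearMap.range_zero, LinearMap.ker_eq_bot.mpr hf]
  have h1 := map_first_exact_on_four_term_right_exact_of_isSMulRegular_last h0 hfg hg hr
  have h2 := (h1 (Submodule.Quotient.mk a)).mp (by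
    rw [Submodule.mapQ_apply]; exact (Submodule.Quotient.mk_eq_zero _).mpr ha)
  obtain ⟨y, hy⟩ := h2
  obtain ⟨y, rfl⟩ := Submodule.Quotient.mk_surjective _ y
  rw [Submodule.mapQ_apply] at hy
  exact (Submodule.Quotient.mk_eq_zero _).mp (by rw [← hy]; simp)

/-- `L` is an `n`-th syzygy through modules on which the sequence `xs` is weakly regular. -/
def RegSyzygy (xs : List R) : ℕ → ModuleCat.{u} R → Prop
  | 0, _ => True
  | n + 1, L => ∃ (F N : ModuleCat.{u} R) (f : L →ₗ[R] F) (g : F →ₗ[R] N),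
      Function.Injective f ∧ Function.Surjective g ∧ Function.Exact f g ∧
      IsWeaklyRegular F xs ∧ RegSyzygy xs n N

lemma RegSyzygy.quotSMulTop {x : R} {xs : List R} {n : ℕ} {L : ModuleCat.{u} R}
    (hL : RegSyzygy (x :: xs) (n + 1) L) :
    IsSMulRegular L x ∧ RegSyzygy xs n (.of R (QuotSMulTop x L)) := by
  induction n generalizing L with
  | zero =>
    obtain ⟨F, N, f, g, hf, hg, hfg, hF, -⟩ := hL
    rw [isWeaklyRegular_cons_iff] at hF
    exact ⟨hF.1.of_injective f hf, trivial⟩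
  | succ n ih =>
    obtain ⟨F, N, f, g, hf, hg, hfg, hF, hN⟩ := hL
    rw [isWeaklyRegular_cons_iff] at hF
    obtain ⟨hN1, hN2⟩ := ih hN
    exact ⟨hF.1.of_injective f hf, .of R (QuotSMulTop x F), .of R (QuotSMulTop x N),
      QuotSMulTop.map x f, QuotSMulTop.map x g, quotSMulTop_map_injective hf hfg hN1,
      QuotSMulTop.map_surjective x hg, QuotSMulTop.map_exact x hfg hg, hF.2, hN2⟩

/-- A sequence of length `n` is weakly regular on `n`-th syzygies. -/
lemma RegSyzygy.isWeaklyRegular {xs : List R} {L : ModuleCat.{u} R}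
    (hL : RegSyzygy xs xs.length L) : IsWeaklyRegular L xs := by
  induction xs generalizing L with
  | nil => exact IsWeaklyRegular.nil R L
  | cons x xs ih =>
    have := RegSyzygy.quotSMulTop hL
    exact (isWeaklyRegular_cons_iff L x xs).mpr ⟨this.1, ih this.2⟩

lemma RegSyzygy.of_succ {xs : List R} {n : ℕ} {L : ModuleCat.{u} R}
    (hL : RegSyzygy xs (n + 1) L) : RegSyzygy xs n L := by
  induction n generalizing L with
  | zero => trivial
  | succ n ih =>
    obtain ⟨F, N, f, g, hf, hg, hfg, hF, hN⟩ := hL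
    exact ⟨F, N, f, g, hf, hg, hfg, hF, ih hN⟩

lemma isWeaklyRegular_fin_fun {xs : List R} (h : IsWeaklyRegular R xs) (n : ℕ) :
    IsWeaklyRegular (Fin n → R) xs :=
  ((TensorProduct.rid R (Fin n → R)).isWeaklyRegular_congr xs).mp
    (h.isWeaklyRegular_lTensor (M₂ := Fin n → R))

variable [IsLocalRing R]

lemma ofList_le_maximalIdeal {rs : List R} (hm : ∀ a ∈ rs, a ∈ maximalIdeal R) :
    Ideal.ofList rs ≤ maximalIdeal R :=
  Ideal.span_le.mpr hm

lemma map_mk_maximalIdeal {J : Ideal R} [IsLocalRing (R ⧸ J)] (hle : J ≤ maximalIdeal R) :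
    (maximalIdeal R).map (Ideal.Quotient.mk J) = maximalIdeal (R ⧸ J) := by
  refine IsLocalRing.eq_maximalIdeal (Ideal.map_eq_top_or_isMaximal_of_surjective _
    Ideal.Quotient.mk_surjective (maximalIdeal.isMaximal R) |>.resolve_left fun h => ?_)
  have := congrArg (Ideal.comap (Ideal.Quotient.mk J)) h
  rw [Ideal.comap_map_of_surjective _ Ideal.Quotient.mk_surjective, Ideal.comap_top,
    ← RingHom.ker_eq_comap_bot, Ideal.mk_ker, sup_eq_left.mpr hle] at this
  exact (maximalIdeal.isMaximal R).ne_top this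

variable [IsNoetherianRing R]

lemma length_le_dim {d : ℕ} (hdim : ringKrullDim R = d) {rs : List R} (hr : IsRegular R rs)
    (hm : ∀ a ∈ rs, a ∈ maximalIdeal R) : rs.length ≤ d := by
  have h1 := ringKrullDim_add_length_eq_ringKrullDim_of_isRegular rs hr
  have : Nontrivial (R ⧸ Ideal.ofList rs) := Ideal.Quotient.nontrivial_iff.mpr
    (ne_top_of_le_ne_top (maximalIdeal.isMaximal R).ne_top (ofList_le_maximalIdeal hm))
  have h2 : 0 ≤ ringKrullDim (R ⧸ Ideal.ofList rs) := ringKrullDim_nonneg_of_nontrivial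
  rw [hdim] at h1
  have h3 : ((rs.length : ℕ) : WithBot ℕ∞) ≤ (d : WithBot ℕ∞) := by
    rw [← h1]; exact le_add_of_nonneg_left h2
  exact_mod_cast h3

lemma isArtinianRing_quotient {d : ℕ} (hdim : ringKrullDim R = d) {rs : List R}
    (hr : IsRegular R rs) (hl : rs.length = d) : IsArtinianRing (R ⧸ Ideal.ofList rs) := by
  have h1 := ringKrullDim_add_length_eq_ringKrullDim_of_isRegular rs hr
  rw [hdim, hl] at h1
  rw [isArtinianRing_iff_krullDimLE_zero, Ring.KrullDimLE, Order.krullDimLE_iff]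
  change ringKrullDim _ ≤ _
  have h2 : ringKrullDim (R ⧸ Ideal.ofList rs) + (d : ℕ) ≤ 0 + (d : ℕ) := by rw [h1, zero_add]
  simpa using ENat.WithBot.add_le_add_natCast_right_iff.mp h2

lemma exists_socle {d : ℕ} (hdim : ringKrullDim R = d) {rs : List R}
    (hr : IsRegular R rs) (hl : rs.length = d) (hm : ∀ a ∈ rs, a ∈ maximalIdeal R) :
    ∃ z : R, z ∉ Ideal.ofList rs ∧ ∀ a ∈ maximalIdeal R, a * z ∈ Ideal.ofList rs := by
  classical
  have := isArtinianRing_quotient hdim hr hl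
  have hle := ofList_le_maximalIdeal hm
  have hne := ne_top_of_le_ne_top (maximalIdeal.isMaximal R).ne_top hle
  have : Nontrivial (R ⧸ Ideal.ofList rs) := Ideal.Quotient.nontrivial_iff.mpr hne
  have : IsLocalRing (R ⧸ Ideal.ofList rs) :=
    IsLocalRing.of_surjective' (Ideal.Quotient.mk _) Ideal.Quotient.mk_surjective
  obtain ⟨N, hN⟩ := (isArtinianRing_iff_isNilpotent_maximalIdeal (R ⧸ Ideal.ofList rs)).mp ‹_›
  have hmap := map_mk_maximalIdeal hle
  have hex : ∃ N, maximalIdeal R ^ N ≤ Ideal.ofList rs := by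
    refine ⟨N, ?_⟩
    rw [← hmap, ← Ideal.map_pow] at hN
    have := Ideal.le_comap_of_map_le hN.le
    rwa [Submodule.zero_eq_bot, ← RingHom.ker_eq_comap_bot, Ideal.mk_ker] at this
  have hpos : Nat.find hex ≠ 0 := fun h0 => by
    have := Nat.find_spec hex
    rw [h0, pow_zero, Ideal.one_eq_top, top_le_iff] at this
    exact hne this
  obtain ⟨N, hN⟩ := Nat.exists_eq_succ_of_ne_zero hpos
  have hlt := Nat.find_min hex (m := N) (by omega)
  obtain ⟨z, hz, hz'⟩ := SetLike.not_le_iff_exists.mp hlt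
  refine ⟨z, hz', fun a ha => Nat.find_spec hex ?_⟩
  rw [hN, pow_succ']
  exact Ideal.mul_mem_mul ha hz

lemma isFiniteLength_quotient {d : ℕ} (hdim : ringKrullDim R = d) {rs : List R}
    (hr : IsRegular R rs) (hl : rs.length = d) : IsFiniteLength R (R ⧸ Ideal.ofList rs) := by
  have := isArtinianRing_quotient hdim hr hl
  rw [isFiniteLength_iff_isNoetherian_isArtinian]
  exact ⟨inferInstance, isArtinian_of_surjective_algebraMap (R := R ⧸ Ideal.ofList rs)
    Ideal.Quotient.mk_surjective⟩

end RegularSequences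

/-! ### Objects of infinite projective dimension -/

section AuslanderBuchsbaum

open RingTheory.Sequence
open scoped Pointwise

variable {R : Type u} [CommRing R]

lemma isWeaklyRegular_of_summand {M N : Type u} [AddCommGroup M] [Module R M] [AddCommGroup N]
    [Module R N] (ι : N →ₗ[R] M) (π : M →ₗ[R] N) (h : π ∘ₗ ι = LinearMap.id) {rs : List R}
    (hM : IsWeaklyRegular M rs) : IsWeaklyRegular N rs := by
  induction rs generalizing M N with
  | nil => exact IsWeaklyRegular.nil R N
  | cons r rs ih =>
    rw [isWeaklyRegular_cons_iff] at hM ⊢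
    have hι : Function.Injective ι :=
      Function.LeftInverse.injective (g := π) fun x => LinearMap.congr_fun h x
    refine ⟨hM.1.of_injective ι hι, ih (QuotSMulTop.map r ι) (QuotSMulTop.map r π) ?_ hM.2⟩
    rw [← QuotSMulTop.map_comp, h, QuotSMulTop.map_id]

lemma mem_smul_hom_of_coord_mem {I : Ideal R} {a b : ℕ} (φ : (Fin b → R) →ₗ[R] (Fin a → R))
    (h : ∀ v i, φ v i ∈ I) : φ ∈ I • (⊤ : Submodule R ((Fin b → R) →ₗ[R] (Fin a → R))) := by
  classical
  have : φ = ∑ j, ∑ i, φ (Pi.single j 1) i •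
      (LinearMap.single R (fun _ => R) i ∘ₗ LinearMap.proj j) := by
    refine LinearMap.pi_ext' fun j => LinearMap.ext_ring ?_
    ext i
    simp [Pi.single_apply]
  rw [this]
  exact Submodule.sum_mem _ fun j _ => Submodule.sum_mem _ fun i _ =>
    Submodule.smul_mem_smul (h _ _) trivial

variable [IsNoetherianRing R] [IsLocalRing R]

/-- Let `0 → B → C → K → 0` be exact with `B → C` in `𝔪 Hom(B, C)`. Then a sequence regular on `K`
is regular on `C`, and `B/(rs)B` has zero socle. For an element `r` regular on `K`, every
`r`-torsion element of `C` comes from one of `B`, hence lies in `𝔪` times the `r`-torsion of `C`,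
which vanishes by Nakayama's lemma; moreover `B/rB → C/rC` stays injective. For the empty sequence,
the injective map `B → C` kills the socle of `B`. -/
lemma isWeaklyRegular_of_minimal {B C K : Type u} [AddCommGroup B] [Module R B]
    [AddCommGroup C] [Module R C] [AddCommGroup K] [Module R K] [Module.Finite R C]
    (f : B →ₗ[R] C) (g : C →ₗ[R] K) (hf : Function.Injective f) (hg : Function.Surjective g)
    (hfg : Function.Exact f g) (hmin : f ∈ maximalIdeal R • (⊤ : Submodule R (B →ₗ[R] C)))
    {rs : List R} (hr : IsWeaklyRegular K rs) :
    IsWeaklyRegular C rs ∧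
      ∀ z : B, (∀ a ∈ maximalIdeal R, a • z ∈ (Ideal.ofList rs • ⊤ : Submodule R B)) →
        z ∈ (Ideal.ofList rs • ⊤ : Submodule R B) := by
  induction rs generalizing B C K with
  | nil =>
    refine ⟨IsWeaklyRegular.nil R C, fun z hz => ?_⟩
    simp only [Ideal.ofList_nil, Submodule.bot_smul, Submodule.mem_bot] at hz ⊢
    have hz0 : f z = 0 := by
      refine Submodule.smul_induction_on (p := fun φ => φ z = 0) hmin ?_ ?_
      · intro a ha φ _
        rw [LinearMap.smul_apply, ← map_smul, hz a ha, map_zero]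
      · intro φ ψ h1 h2
        rw [LinearMap.add_apply, h1, h2, add_zero]
    exact hf (by rw [hz0, map_zero])
  | cons r rs ih =>
    rw [isWeaklyRegular_cons_iff] at hr
    let T : Submodule R C := Submodule.torsionBy R C r
    have hT : ∀ b : B, r • b = 0 → f b ∈ maximalIdeal R • T := by
      intro b hb
      refine Submodule.smul_induction_on (p := fun φ => φ b ∈ maximalIdeal R • T) hmin ?_ ?_
      · intro a ha φ _
        refine Submodule.smul_mem_smul ha ?_
        rw [Submodule.mem_torsionBy_iff, ← map_smul, hb, map_zero]
      · intro φ ψ h1 h2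
        exact Submodule.add_mem _ h1 h2
    have hTle : T ≤ maximalIdeal R • T := by
      intro t ht
      rw [Submodule.mem_torsionBy_iff] at ht
      have h1 : g t = 0 := hr.1.right_eq_zero_of_smul (by rw [← map_smul, ht, map_zero])
      obtain ⟨b, rfl⟩ := (hfg t).mp h1
      exact hT b (hf (by rw [map_smul, ht, map_zero]))
    have hT0 : T = ⊥ := Submodule.eq_bot_of_le_smul_of_le_jacobson_bot (maximalIdeal R) T
      (IsNoetherian.noetherian T) hTle (maximalIdeal_le_jacobson _)
    have hC : IsSMulRegular C r := by
      rw [isSMulRegular_iff_right_eq_zero_of_smul]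
      intro t ht
      have : t ∈ T := (Submodule.mem_torsionBy_iff _ _).mpr ht
      rwa [hT0, Submodule.mem_bot] at this
    have hmin' : QuotSMulTop.map r f ∈ maximalIdeal R •
        (⊤ : Submodule R (QuotSMulTop r B →ₗ[R] QuotSMulTop r C)) := by
      have := Submodule.mem_map_of_mem (f := QuotSMulTop.map r) hmin
      rw [Submodule.map_smul''] at this
      exact Submodule.smul_mono le_rfl le_top this
    obtain ⟨h1, h2⟩ := ih (QuotSMulTop.map r f) (QuotSMulTop.map r g)
      (quotSMulTop_map_injective hf hfg hr.1) (QuotSMulTop.map_surjective r hg)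
      (QuotSMulTop.map_exact r hfg hg) hmin' hr.2
    refine ⟨(isWeaklyRegular_cons_iff C r rs).mpr ⟨hC, h1⟩, fun z hz => ?_⟩
    let e := Submodule.quotOfListConsSMulTopEquivQuotSMulTopInner B r rs
    have he : ∀ y : B, y ∈ (Ideal.ofList (r :: rs) • ⊤ : Submodule R B) ↔
        (Submodule.Quotient.mk y : QuotSMulTop r B) ∈
          (Ideal.ofList rs • ⊤ : Submodule R (QuotSMulTop r B)) := by
      intro y
      rw [← Submodule.Quotient.mk_eq_zero, ← Submodule.Quotient.mk_eq_zero (Ideal.ofList rs • ⊤),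
        ← map_eq_zero_iff e e.injective]
      rfl
    rw [he]
    refine h2 _ fun a ha => ?_
    rw [← Submodule.Quotient.mk_smul]
    exact (he _).mp (hz a ha)

/-- Over a ring of dimension `d`, a minimal first syzygy of a non-free module of depth at least
`d` is not free: otherwise a sequence `rs` of length `d` regular on the module is regular on `R`,
and the artinian ring `R/(rs)` would have zero socle. -/
lemma not_free_ker {d : ℕ} (hdim : ringKrullDim R = d) {K : Type u} [AddCommGroup K] [Module R K]
    (hK : ∃ rs : List R, rs.length = d ∧ (∀ a ∈ rs, a ∈ maximalIdeal R) ∧ IsWeaklyRegular K rs)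
    (hnf : ¬ Module.Free R K) {a : ℕ} (f : (Fin a → R) →ₗ[R] K) (hf : Function.Surjective f)
    (hmin : ∀ c, f c = 0 → ∀ i, c i ∈ maximalIdeal R) :
    ¬ Module.Free R (LinearMap.ker f) := by
  classical
  intro hfree
  obtain ⟨rs, hl, hm, hrs⟩ := hK
  let e := (Module.finBasis R (LinearMap.ker f)).equivFun.symm
  set b := Module.finrank R (LinearMap.ker f) with hb
  let φ : (Fin b → R) →ₗ[R] (Fin a → R) := (LinearMap.ker f).subtype ∘ₗ e.toLinearMap
  have hφ : Function.Injective φ := (Submodule.injective_subtype _).comp e.injective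
  have hφf : Function.Exact φ f := by
    rw [LinearMap.exact_iff, LinearMap.range_comp, LinearEquiv.range, Submodule.map_top,
      Submodule.range_subtype]
  have hφm : φ ∈ maximalIdeal R • (⊤ : Submodule R ((Fin b → R) →ₗ[R] (Fin a → R))) :=
    mem_smul_hom_of_coord_mem φ fun v i => hmin _ (e v).2 i
  obtain ⟨h1, h2⟩ := isWeaklyRegular_of_minimal φ f hφ hf hφf hφm hrs
  have hb0 : b ≠ 0 := by
    intro h0
    have : IsEmpty (Fin b) := by rw [h0]; infer_instance
    have : Subsingleton (LinearMap.ker f) := e.symm.injective.subsingleton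
    have hinj : Function.Injective f :=
      LinearMap.ker_eq_bot.mp (Submodule.eq_bot_of_subsingleton)
    exact hnf (Module.Free.of_equiv (LinearEquiv.ofBijective f ⟨hinj, hf⟩))
  let j : Fin b := ⟨0, Nat.pos_of_ne_zero hb0⟩
  have hR : IsWeaklyRegular R rs := by
    cases a with
    | zero =>
      have h01 : (Pi.single j 1 : Fin b → R) = 0 := hφ (Subsingleton.elim _ _)
      have := congrFun h01 j
      simp at this
    | succ a =>
      refine isWeaklyRegular_of_summand (LinearMap.single R (fun _ : Fin (a + 1) => R) 0)
        (LinearMap.proj 0) ?_ h1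
      ext; simp
  have hreg : IsRegular R rs :=
    (IsLocalRing.isRegular_iff_isWeaklyRegular_of_subset_maximalIdeal hm).mpr hR
  obtain ⟨z, hz, hz'⟩ := exists_socle hdim hreg hl hm
  apply hz
  have h3 := h2 (z • Pi.single j 1) fun c hc => by
    rw [smul_smul]
    exact Submodule.smul_mem_smul (hz' c hc) trivial
  have h4 := Submodule.mem_map_of_mem (f := LinearMap.proj (R := R) (φ := fun _ => R) j) h3
  rw [Submodule.map_smul''] at h4
  have h5 := Submodule.smul_mono le_rfl le_top h4
  simpa using h5

end AuslanderBuchsbaum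

/-! ### Local rings with decomposable maximal ideal -/

section Decomposable

variable {R : Type u} [CommRing R] {P : ModuleCat.{u} R → Prop} {A : Type u} [CommRing A]
  [IsLocalRing A] [Algebra R A]

lemma smul_eq_zero_of_disjoint {N₁ N₂ : Submodule A (maximalIdeal A)} (hc : Disjoint N₁ N₂)
    {i j : maximalIdeal A} (hi : i ∈ N₁) (hj : j ∈ N₂) : (j : A) • i = 0 := by
  refine (Submodule.disjoint_def.mp hc) _ (N₁.smul_mem _ hi) ?_
  have : (j : A) • i = (i : A) • j := Subtype.ext (mul_comm _ _)
  rw [this]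
  exact N₂.smul_mem _ hj

/-- Let the maximal ideal of `A` be the direct sum of `N₁` and `N₂`. If a nonzero object `U` of `P`
is an `A`-module killed by `N₂`, then `N₂` embeds into one coordinate of the kernel of a minimal
cover `Aᵖ → U`, as a direct summand. -/
lemma IsResolvingSubcat.component_mem (h : IsResolvingSubcat R P) (hA : P (.of R A))
    {N₁ N₂ : Submodule A (maximalIdeal A)} (hc : IsCompl N₁ N₂) {U : Type u} [AddCommGroup U]
    [Module A U] [Module R U] [IsScalarTower R A U] [Nontrivial U] (hU : P (.of R U))
    (hann : ∀ j ∈ N₂, ∀ u : U, (j : A) • u = 0) : P (.of R N₂) := by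
  have : Module.Finite R U := h.fg _ hU
  have : Module.Finite A U := Module.Finite.of_restrictScalars_finite R A U
  obtain ⟨p, f, hf, hmin⟩ := exists_minimal_cover A U
  have hK : P (.of R (LinearMap.ker f)) :=
    h.of_kernel ((LinearMap.ker f).subtype.restrictScalars R) (f.restrictScalars R)
      (Submodule.injective_subtype _) hf (exact_subtype_ker f) (h.pi hA p) hU
  obtain _ | p := p
  · obtain ⟨u, hu⟩ := exists_ne (0 : U)
    obtain ⟨v, rfl⟩ := hf u
    exact absurd (by rw [Subsingleton.elim v 0, map_zero]) hu
  let ι : N₂ →ₗ[A] LinearMap.ker f := LinearMap.codRestrict _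
    (LinearMap.single A (fun _ => A) 0 ∘ₗ (maximalIdeal A).subtype ∘ₗ N₂.subtype) fun j => by
      have : LinearMap.single A (fun _ : Fin (p + 1) => A) 0 (j.1 : A) =
          (j.1 : A) • Pi.single 0 1 := by
        ext i
        simp [Pi.single_apply]
      change f (LinearMap.single A (fun _ : Fin (p + 1) => A) 0 (j.1 : A)) = 0
      rw [this, map_smul, hann _ j.2]
  let κ : LinearMap.ker f →ₗ[A] maximalIdeal A :=
    LinearMap.codRestrict (maximalIdeal A) (LinearMap.proj 0 ∘ₗ (LinearMap.ker f).subtype)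
      fun c => hmin c.1 (LinearMap.mem_ker.mp c.2) 0
  have hκ : ∀ j, κ (ι j) = j.1 := fun j =>
    Subtype.ext (Pi.single_eq_same (M := fun _ : Fin (p + 1) => A) 0 (j.1 : A))
  refine h.of_summand (ι.restrictScalars R)
    ((N₂.projectionOnto N₁ hc.symm ∘ₗ κ).restrictScalars R) (fun j => ?_) hK
  exact (congrArg _ (hκ j)).trans (Submodule.projectionOnto_apply_left hc.symm j)

/-- An endomorphism of the maximal ideal, applied coordinatewise, preserves the solutions in the
maximal ideal of a homogeneous system of linear equations. -/
lemma map_coord_eq_zero {a b : ℕ} (ψ : (Fin b → A) →ₗ[A] (Fin a → A))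
    (p : maximalIdeal A →ₗ[A] maximalIdeal A) (c : Fin b → maximalIdeal A)
    (hc : ψ (fun i => (c i : A)) = 0) : ψ (fun i => (p (c i) : A)) = 0 := by
  classical
  have key : ∀ (w : Fin b → maximalIdeal A) (j : Fin a), ψ (fun i => (w i : A)) j =
      ((∑ i, ψ (Pi.single i 1) j • w i : maximalIdeal A) : A) := by
    intro w j
    have : (fun i => (w i : A)) = ∑ i, (w i : A) • (Pi.single i 1 : Fin b → A) := by
      ext i
      simp [Pi.single_apply]
    rw [this, map_sum, Finset.sum_apply]
    simp [mul_comm]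
  ext j
  have h1 : (∑ i, ψ (Pi.single i 1) j • c i : maximalIdeal A) = 0 :=
    Subtype.ext (by rw [← key, hc]; rfl)
  have h2 := congrArg p h1
  rw [map_sum, map_zero] at h2
  simp only [map_smul] at h2
  rw [key (fun i => p (c i)), h2]
  rfl

/-- Project the kernel of `ψ`, assumed to lie in `𝔪 Aᵇ`, coordinatewise to the summand `N₁` of `𝔪`.
The image is a direct summand of the kernel and is killed by `N₂`. If it is nonzero, then `N₂` lies
in `P`, and so does `N₁`, because `N₂` is itself killed by `N₁`; if it vanishes, all entries of
vectors in the kernel are in `N₂`. -/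
lemma IsResolvingSubcat.components_mem_or (h : IsResolvingSubcat R P) (hA : P (.of R A))
    {N₁ N₂ : Submodule A (maximalIdeal A)} (hc : IsCompl N₁ N₂) (hN₂ : N₂ ≠ ⊥) {a b : ℕ}
    (ψ : (Fin b → A) →ₗ[A] (Fin a → A)) (hψ : ∀ c, ψ c = 0 → ∀ i, c i ∈ maximalIdeal A)
    (hW : P (.of R (LinearMap.ker ψ))) :
    (P (.of R N₁) ∧ P (.of R N₂)) ∨
      ∀ c : Fin b → maximalIdeal A, ψ (fun i => (c i : A)) = 0 → ∀ i, c i ∈ N₂ := by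
  let p := N₁.projection N₂ hc
  let T : LinearMap.ker ψ →ₗ[A] LinearMap.ker ψ :=
    { toFun := fun c => ⟨fun i => (p ⟨c.1 i, hψ _ c.2 i⟩ : A),
        map_coord_eq_zero ψ p (fun i => ⟨c.1 i, hψ _ c.2 i⟩) c.2⟩
      map_add' := fun c c' => by
        ext i
        exact congrArg Subtype.val
          (map_add p ⟨c.1 i, hψ _ c.2 i⟩ ⟨c'.1 i, hψ _ c'.2 i⟩)
      map_smul' := fun r c => by
        ext i
        exact congrArg Subtype.val (map_smul p r ⟨c.1 i, hψ _ c.2 i⟩) }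
  have hTN : ∀ c i, ∃ n ∈ N₁, (n : A) = (T c).1 i := fun c i =>
    ⟨_, Submodule.projection_apply_mem hc _, rfl⟩
  have hTT : ∀ c, T (T c) = T c := fun c => by
    ext i
    exact congrArg Subtype.val (LinearMap.congr_fun
      (Submodule.isIdempotentElem_projection hc) ⟨c.1 i, hψ _ c.2 i⟩)
  have hU : P (.of R (LinearMap.range T)) :=
    h.of_summand ((LinearMap.range T).subtype.restrictScalars R)
      (T.rangeRestrict.restrictScalars R) (by
        rintro ⟨_, c, rfl⟩
        exact Subtype.ext (hTT c)) hW
  by_cases hT : Nontrivial (LinearMap.range T)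
  · left
    have h2 : P (.of R N₂) := by
      refine h.component_mem hA hc hU ?_
      rintro j hj ⟨_, c, rfl⟩
      ext i
      obtain ⟨n, hn, hni⟩ := hTN c i
      change (j : A) * (T c).1 i = 0
      rw [← hni]
      exact congrArg Subtype.val (smul_eq_zero_of_disjoint hc.disjoint hn hj)
    have : Nontrivial N₂ := (Submodule.nontrivial_iff_ne_bot).mpr hN₂
    refine ⟨h.component_mem hA hc.symm h2 ?_, h2⟩
    rintro i hi ⟨j, hj⟩
    exact Subtype.ext (smul_eq_zero_of_disjoint hc.symm.disjoint hj hi)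
  · right
    intro c hc0 i
    rw [not_nontrivial_iff_subsingleton] at hT
    have h0 : T ⟨fun i => (c i : A), hc0⟩ = 0 :=
      congrArg Subtype.val (Subsingleton.elim (⟨_, _, rfl⟩ : LinearMap.range T) 0)
    have h1 : p (c i) = 0 := Subtype.ext (congrFun (congrArg Subtype.val h0) i)
    exact (Submodule.projection_apply_eq_zero_iff hc).mp h1

lemma IsResolvingSubcat.maximalIdeal_mem (h : IsResolvingSubcat R P) (hA : P (.of R A))
    (hdec : IsDecomposableModule A (maximalIdeal A)) {a b : ℕ}
    (ψ : (Fin b → A) →ₗ[A] (Fin a → A)) (hψ : ∀ c, ψ c = 0 → ∀ i, c i ∈ maximalIdeal A)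
    (hW : P (.of R (LinearMap.ker ψ))) (hW0 : LinearMap.ker ψ ≠ ⊥) :
    P (.of R (maximalIdeal A)) := by
  obtain ⟨N₁, N₂, hN₁, hN₂, hinf, hsup⟩ := hdec
  have hc : IsCompl N₁ N₂ := ⟨disjoint_iff.mpr hinf, codisjoint_iff.mpr hsup⟩
  suffices P (.of R N₁) ∧ P (.of R N₂) from
    h.of_equiv ((Submodule.prodEquivOfIsCompl N₁ N₂ hc).restrictScalars R) (h.prod this.1 this.2)
  rcases h.components_mem_or hA hc hN₂ ψ hψ hW with h1 | h1
  · exact h1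
  rcases h.components_mem_or hA hc.symm hN₁ ψ hψ hW with h2 | h2
  · exact h2.symm
  refine absurd ((Submodule.eq_bot_iff _).mpr fun c hc0 => ?_) hW0
  ext i
  exact congrArg Subtype.val (Submodule.disjoint_def.mp hc.disjoint _
    (h2 (fun i => ⟨c i, hψ c hc0 i⟩) hc0 i) (h1 (fun i => ⟨c i, hψ c hc0 i⟩) hc0 i))

end Decomposable

/-! ### Reduction modulo the regular sequence -/

section Reduction

open RingTheory.Sequence

variable {R : Type u} [CommRing R] {P : ModuleCat.{u} R → Prop}

lemma mem_smul_top_fin_fun_iff {I : Ideal R} {n : ℕ} {v : Fin n → R} :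
    v ∈ (I • ⊤ : Submodule R (Fin n → R)) ↔ ∀ i, v i ∈ I := by
  classical
  constructor
  · intro hv i
    refine Submodule.smul_induction_on (p := fun v => v i ∈ I) hv ?_ ?_
    · intro r hr w _
      exact I.mul_mem_right _ hr
    · intro w w' h1 h2
      exact I.add_mem h1 h2
  · intro hv
    have : v = ∑ i, v i • (Pi.single i 1 : Fin n → R) := by
      ext i
      simp [Pi.single_apply]
    rw [this]
    exact Submodule.sum_mem _ fun i _ => Submodule.smul_mem_smul (hv i) trivial

lemma IsResolvingSubcat.ring_quotient_mem (h : IsResolvingSubcat R P) {xs : List R}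
    (hx : IsWeaklyRegular R xs) : SyzIn^[xs.length] P (.of R (R ⧸ Ideal.ofList xs)) := by
  have h1 := h.quotient_mem xs h.contains_ring hx
  rwa [smul_eq_mul, Ideal.mul_top] at h1

variable [IsNoetherianRing R] [IsLocalRing R]

/-- Passing to minimal syzygies, one finds non-free objects of `P` that are `n`-th syzygies. -/
lemma IsResolvingSubcat.exists_regSyzygy (h : IsResolvingSubcat R P) {d : ℕ}
    (hdim : ringKrullDim R = d)
    (hMCM : ∀ A : ModuleCat.{u} R, P A → ∃ rs : List R, rs.length = d ∧
      (∀ a ∈ rs, a ∈ maximalIdeal R) ∧ IsWeaklyRegular A rs)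
    (hnonfree : ∃ A : ModuleCat.{u} R, P A ∧ ¬ Module.Free R A) {xs : List R}
    (hx : IsWeaklyRegular R xs) (n : ℕ) :
    ∃ M : ModuleCat.{u} R, P M ∧ ¬ Module.Free R M ∧ RegSyzygy xs n M := by
  induction n with
  | zero =>
    obtain ⟨A, hA, hnf⟩ := hnonfree
    exact ⟨A, hA, hnf, trivial⟩
  | succ n ih =>
    obtain ⟨M, hM, hnf, hreg⟩ := ih
    have := h.fg _ hM
    obtain ⟨m, f, hf, hmin⟩ := exists_minimal_cover R M
    exact ⟨.of R (LinearMap.ker f), h.syzygy_closed M m f hf hM,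
      not_free_ker hdim (hMCM M hM) hnf f hf hmin, .of R (Fin m → R), M,
      (LinearMap.ker f).subtype, f, Submodule.injective_subtype _, hf, exact_subtype_ker f,
      isWeaklyRegular_fin_fun hx m, hreg⟩

/-- Let `Rᵇ → Rᵃ → M → 0` be the start of a minimal resolution of `M`, and `xs` a sequence regular
on `M` and on its first syzygy `L`. Reducing the matrix modulo `xs` gives a matrix over `R/(xs)`
whose kernel consists of vectors with entries in the maximal ideal, is nonzero if `L` is not free,
and lies in the subcategory of modules whose `n`-th syzygies are in `P`, with `n` the length of
`xs`. -/
lemma IsResolvingSubcat.exists_matrix (h : IsResolvingSubcat R P) {xs : List R}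
    (hm : ∀ a ∈ xs, a ∈ maximalIdeal R) [IsLocalRing (R ⧸ Ideal.ofList xs)]
    (hA : SyzIn^[xs.length] P (.of R (R ⧸ Ideal.ofList xs)))
    {M : Type u} [AddCommGroup M] [Module R M] (hMx : IsWeaklyRegular M xs) {a : ℕ}
    (g : (Fin a → R) →ₗ[R] M) (hg : Function.Surjective g)
    (hL : P (.of R (LinearMap.ker g))) (hLx : IsWeaklyRegular (LinearMap.ker g) xs)
    (hLf : ¬ Module.Free R (LinearMap.ker g)) :
    ∃ (b : ℕ) (ψ : (Fin b → R ⧸ Ideal.ofList xs) →ₗ[R ⧸ Ideal.ofList xs]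
        (Fin a → R ⧸ Ideal.ofList xs)),
      (∀ c, ψ c = 0 → ∀ i, c i ∈ maximalIdeal (R ⧸ Ideal.ofList xs)) ∧
      SyzIn^[xs.length] P (.of R (LinearMap.ker ψ)) ∧ LinearMap.ker ψ ≠ ⊥ := by
  classical
  have hle := ofList_le_maximalIdeal hm
  set J := Ideal.ofList xs with hJ
  set mk := Ideal.Quotient.mk J with hmk
  obtain ⟨b, f, hf, hmin⟩ := exists_minimal_cover R (LinearMap.ker g)
  let φ : (Fin b → R) →ₗ[R] (Fin a → R) := (LinearMap.ker g).subtype ∘ₗ f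
  let ψ : (Fin b → R ⧸ J) →ₗ[R ⧸ J] (Fin a → R ⧸ J) :=
    ((LinearMap.toMatrix' φ).map mk).mulVecLin
  have hψ : ∀ v, ψ (fun i => mk (v i)) = fun j => mk ((f v : Fin a → R) j) := by
    intro v
    ext j
    have := RingHom.map_mulVec mk (LinearMap.toMatrix' φ) v j
    rw [LinearMap.toMatrix'_mulVec] at this
    exact this.symm
  have hlift : ∀ {n : ℕ} (c : Fin n → R ⧸ J), ∃ v : Fin n → R, c = fun i => mk (v i) := by
    intro n c
    choose v hv using fun i => Ideal.Quotient.mk_surjective (c i)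
    exact ⟨v, funext fun i => (hv i).symm⟩
  let θ : LinearMap.ker g →ₗ[R] (Fin a → R ⧸ J) :=
    LinearMap.pi fun j => (Algebra.linearMap R (R ⧸ J)) ∘ₗ LinearMap.proj j ∘ₗ
      (LinearMap.ker g).subtype
  have hθ : ∀ l, θ l = fun j => mk (l.1 j) := fun l => rfl
  have hθker : LinearMap.ker θ = J • ⊤ := by
    ext l
    rw [LinearMap.mem_ker, hθ, funext_iff]
    have h1 : (∀ j, mk (l.1 j) = (0 : Fin a → R ⧸ J) j) ↔
        (l : Fin a → R) ∈ (J • ⊤ : Submodule R (Fin a → R)) := by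
      rw [mem_smul_top_fin_fun_iff]
      exact forall_congr' fun j => Ideal.Quotient.eq_zero_iff_mem
    rw [h1]
    constructor
    · exact fun hl => mem_smul_top_of_apply_mem (Submodule.injective_subtype _) hg
        (exact_subtype_ker g) hMx hl
    · intro hl
      have := Submodule.mem_map_of_mem (f := (LinearMap.ker g).subtype) hl
      rw [Submodule.map_smul''] at this
      exact Submodule.smul_mono le_rfl le_top this
  have hY := h.syzIn_iterate xs.length
  have hrange : SyzIn^[xs.length] P (.of R (LinearMap.range θ)) := by
    have := h.quotient_mem xs hL hLx
    rw [← hJ, ← hθker] at this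
    exact hY.of_equiv θ.quotKerEquivRange this
  have hψmem : ∀ c, (ψ.restrictScalars R) c ∈ LinearMap.range θ := by
    intro c
    obtain ⟨v, rfl⟩ := hlift c
    exact ⟨f v, by rw [hθ]; exact (hψ v).symm⟩
  refine ⟨b, ψ, ?_, ?_, ?_⟩
  · intro c hc i
    obtain ⟨v, rfl⟩ := hlift c
    have h1 : f v ∈ (J • ⊤ : Submodule R (LinearMap.ker g)) := by
      rw [← hθker, LinearMap.mem_ker, hθ, ← hψ, hc]
    rw [← LinearMap.range_eq_top.mpr hf, LinearMap.range_eq_map, ← Submodule.map_smul''] at h1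
    obtain ⟨y, hy, hyv⟩ := h1
    have h2 : v i - y i ∈ maximalIdeal R :=
      hmin (v - y) (by rw [map_sub, hyv, sub_self]) i
    have h3 : y i ∈ maximalIdeal R := hle (mem_smul_top_fin_fun_iff.mp hy i)
    rw [← map_mk_maximalIdeal hle]
    exact Ideal.mem_map_of_mem _ (by simpa using add_mem h2 h3)
  · refine hY.of_kernel ((LinearMap.ker ψ).subtype.restrictScalars R)
      ((ψ.restrictScalars R).codRestrict _ hψmem) (Submodule.injective_subtype _) ?_ ?_
      (hY.pi hA b) hrange
    · rintro ⟨_, l, rfl⟩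
      obtain ⟨v, rfl⟩ := hf l
      exact ⟨fun i => mk (v i), Subtype.ext (hψ v)⟩
    · intro c
      constructor
      · intro hc
        exact ⟨⟨c, congrArg Subtype.val hc⟩, rfl⟩
      · rintro ⟨c, rfl⟩
        exact Subtype.ext c.2
  · intro hbot
    have h1 : (⊤ : Submodule R (LinearMap.ker f)) ≤ J • ⊤ := by
      rintro l -
      refine mem_smul_top_of_apply_mem (Submodule.injective_subtype _) hf
        (exact_subtype_ker f) hLx (mem_smul_top_fin_fun_iff.mpr fun i => ?_)
      have h2 : (fun i => mk (l.1 i)) ∈ LinearMap.ker ψ := by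
        rw [LinearMap.mem_ker, hψ, LinearMap.mem_ker.mp l.2]
        ext j
        simp
      rw [hbot, Submodule.mem_bot] at h2
      exact Ideal.Quotient.eq_zero_iff_mem.mp (congrFun h2 i)
    have h2 : (⊤ : Submodule R (LinearMap.ker f)) = ⊥ :=
      Submodule.eq_bot_of_le_smul_of_le_jacobson_bot J _ (IsNoetherian.noetherian _) h1
        (hle.trans (maximalIdeal_le_jacobson _))
    have h3 : Function.Injective f := by
      rw [← LinearMap.ker_eq_bot]
      have := (Submodule.subsingleton_iff R).mp (subsingleton_of_bot_eq_top h2.symm)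
      exact Submodule.eq_bot_of_subsingleton
    exact hLf (Module.Free.of_equiv (LinearEquiv.ofBijective f ⟨h3, hf⟩))

/-- If the `(d + 1)`-st syzygies of `k` lie in `P`, so do the `d`-th ones: embed `k` into the socle
of an artinian reduction `R/(rs)`. The cokernel has finite length, so its `(d + 1)`-st syzygies lie
in `P`, and `R/(rs)` has projective dimension `d`. -/
lemma IsResolvingSubcat.residueField_mem (h : IsResolvingSubcat R P) {d : ℕ}
    (hdim : ringKrullDim R = d) {rs : List R} (hl : rs.length = d)
    (hm : ∀ a ∈ rs, a ∈ maximalIdeal R) (hr : IsRegular R rs)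
    (hk : SyzIn^[d + 1] P (.of R (ResidueField R))) :
    SyzIn^[d] P (.of R (ResidueField R)) := by
  obtain ⟨z, hz, hz'⟩ := exists_socle hdim hr hl hm
  have hY := h.syzIn_iterate d
  have hA : SyzIn^[d] P (.of R (R ⧸ Ideal.ofList rs)) :=
    hl ▸ h.ring_quotient_mem hr.toIsWeaklyRegular
  let s : R →ₗ[R] (R ⧸ Ideal.ofList rs) := LinearMap.toSpanSingleton R _ (Ideal.Quotient.mk _ z)
  have hs : ∀ a, s a = Ideal.Quotient.mk _ (a * z) := fun a => rfl
  have hker : LinearMap.ker s = maximalIdeal R := by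
    refine le_antisymm (IsLocalRing.le_maximalIdeal fun htop => hz ?_) fun a ha => ?_
    · have : (1 : R) ∈ LinearMap.ker s := htop ▸ trivial
      rw [LinearMap.mem_ker, hs, one_mul] at this
      exact Ideal.Quotient.eq_zero_iff_mem.mp this
    · rw [LinearMap.mem_ker, hs]
      exact Ideal.Quotient.eq_zero_iff_mem.mpr (hz' a ha)
  have e : ResidueField R ≃ₗ[R] LinearMap.range s :=
    (Submodule.quotEquivOfEq _ _ hker.symm).trans s.quotKerEquivRange
  refine hY.of_equiv e.symm ?_
  have hN : IsFiniteLength R ((R ⧸ Ideal.ofList rs) ⧸ LinearMap.range s) :=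
    (isFiniteLength_quotient hdim hr hl).of_surjective (Submodule.mkQ_surjective _)
  have hN' := (h.syzIn_iterate (d + 1)).finiteLength_mem hk hN
  rw [Function.iterate_succ_apply'] at hN'
  refine hY.of_syzIn (LinearMap.range s).subtype (LinearMap.range s).mkQ
    (Submodule.injective_subtype _) (Submodule.mkQ_surjective _) ?_ hA hN'
  rw [LinearMap.exact_iff, Submodule.ker_mkQ, Submodule.range_subtype]

end Reduction

/-- **Lemma 4.5.** Let `R` be a `d`-dimensional Cohen-Macaulay local ring with quasi-decomposable
maximal ideal, and let `𝒳` be a resolving subcategory of `mod R` contained in `CM(R)`. If `𝒳`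
contains a non-free module, then `𝒳` contains `Ω^d k`, where `k` is the residue field. -/
theorem resolving_subcat_contains_syzygy_of_residue_field
    (R : Type u) [CommRing R] [IsNoetherianRing R] [IsLocalRing R]
    (d : ℕ) (hdim : ringKrullDim R = d)
    -- `R` is Cohen-Macaulay: there is a regular sequence of length `d = dim R` in `𝔪`
    (hCM : ∃ rs : List R, rs.length = d ∧ (∀ a ∈ rs, a ∈ maximalIdeal R) ∧
      RingTheory.Sequence.IsRegular R rs)
    (hqd : HasQuasiDecomposableMaxIdeal R)
    (P : ModuleCat.{u} R → Prop) (hres : IsResolvingSubcat R P)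
    -- every module in `𝒳` is maximal Cohen-Macaulay (depth ≥ d = dim R)
    (hMCM : ∀ A : ModuleCat.{u} R, P A → ∃ rs : List R, rs.length = d ∧
      (∀ a ∈ rs, a ∈ maximalIdeal R) ∧ RingTheory.Sequence.IsWeaklyRegular A rs)
    (hnonfree : ∃ A : ModuleCat.{u} R, P A ∧ ¬ Module.Free R A) :
    ∀ (S : Type u) [AddCommGroup S] [Module R S],
      IsNthSyzygy R d (IsLocalRing.ResidueField R) S → P (ModuleCat.of R S) := by
  intro S _ _ hS
  obtain ⟨rs, hl, hrm, hr⟩ := hCM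
  obtain ⟨xs, hm, hx, hdec⟩ := hqd
  have hx' := hx.toIsWeaklyRegular
  have hle := ofList_le_maximalIdeal hm
  have : Nontrivial (R ⧸ Ideal.ofList xs) := Ideal.Quotient.nontrivial_iff.mpr
    (ne_top_of_le_ne_top (maximalIdeal.isMaximal R).ne_top hle)
  have : IsLocalRing (R ⧸ Ideal.ofList xs) :=
    IsLocalRing.of_surjective' (Ideal.Quotient.mk _) Ideal.Quotient.mk_surjective
  rw [map_mk_maximalIdeal hle] at hdec
  have hA := hres.ring_quotient_mem hx'
  have hY := hres.syzIn_iterate xs.length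
  -- membership in `SyzIn^[n] P` means that the `n`-th syzygies lie in `P`
  have hmA : IsResolvingSubcat.SyzIn^[xs.length] P
      (.of R (maximalIdeal (R ⧸ Ideal.ofList xs))) := by
    obtain ⟨M, hM, hnf, hreg⟩ := hres.exists_regSyzygy hdim hMCM hnonfree hx' xs.length
    have := hres.fg _ hM
    obtain ⟨a, g, hg, hmin⟩ := exists_minimal_cover R M
    have hLreg : RegSyzygy xs (xs.length + 1) (.of R (LinearMap.ker g)) :=
      ⟨.of R (Fin a → R), M, (LinearMap.ker g).subtype, g, Submodule.injective_subtype _, hg,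
        IsResolvingSubcat.exact_subtype_ker g, isWeaklyRegular_fin_fun hx' a, hreg⟩
    obtain ⟨b, ψ, hψ, hW, hW0⟩ := hres.exists_matrix hm hA hreg.isWeaklyRegular g hg
      (hres.syzygy_closed M a g hg hM) hLreg.of_succ.isWeaklyRegular
      (not_free_ker hdim (hMCM M hM) hnf g hg hmin)
    exact hY.maximalIdeal_mem hA hdec ψ hψ hW hW0
  have hk : IsResolvingSubcat.SyzIn^[xs.length + 1] P (.of R (ResidueField R)) := by
    rw [Function.iterate_succ_apply']
    have hq : Ideal.ofList xs ≤ LinearMap.ker (Algebra.linearMap R (ResidueField R)) := by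
      intro a ha
      exact (residue_eq_zero_iff a).mpr (hle ha)
    refine hY.syzIn_of_cokernel
      ((maximalIdeal (R ⧸ Ideal.ofList xs)).subtype.restrictScalars R)
      (Submodule.liftQ (Ideal.ofList xs) (Algebra.linearMap R (ResidueField R)) hq)
      (Submodule.injective_subtype _) ?_ ?_ hmA hA
    · intro y
      obtain ⟨a, rfl⟩ := residue_surjective y
      exact ⟨Submodule.Quotient.mk a, rfl⟩
    · intro y
      obtain ⟨a, rfl⟩ := Ideal.Quotient.mk_surjective y
      have h1 : Ideal.Quotient.mk (Ideal.ofList xs) a ∈ maximalIdeal (R ⧸ Ideal.ofList xs) ↔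
          a ∈ maximalIdeal R := by
        rw [← map_mk_maximalIdeal hle, Ideal.mem_quotient_iff_mem hle]
      refine (residue_eq_zero_iff a).trans (h1.symm.trans ?_)
      constructor
      · exact fun h => ⟨⟨_, h⟩, rfl⟩
      · rintro ⟨w, hw⟩
        rw [← hw]
        exact w.2
  have hk' := hres.syzIn_iterate_mono (Nat.succ_le_succ (length_le_dim hdim hx hm)) hk
  exact hres.isNthSyzygy_mem (hres.residueField_mem hdim hl hrm hr hk') hS
end
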